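/- arXiv:2307.15358 — 5 statements merged into one kernel-verified Lean document; each statement's English description precedes it below -/
import Mathlib

section
/- Let L be a type of formulas with a variable function var : L → Set V (each var(α) finite) where V is infinite, and suppose every variable is a formula: there is an injection ι : V → L with var(ι q) = {q} for each q ∈ V. Let ⊢ be a consequence relation on L. If α, β ∈ L are such that {α, β} ⊢ᵖˡ γ for every γ ∈ L, then var(α) = ∅ or var(β) = ∅. Moreover, if additionally ∅ ⊬ ι q for every q ∈ V, then the same conclusion holds for ⊢ˡ: if {α, β} ⊢ˡ γ for every γ ∈ L, then var(α) = ∅ or var(β) = ∅. -/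
/-- The set of variables occurring in a set of formulas. -/
def varSet {L V : Type*} (var : L → Set V) (Γ : Set L) : Set V := ⋃ α ∈ Γ, var α

/-- The left variable inclusion companion of a consequence relation. -/
def LVI {L V : Type*} (var : L → Set V) (vdash : Set L → L → Prop)
    (Γ : Set L) (α : L) : Prop :=
  ∃ Δ ⊆ Γ, varSet var Δ ⊆ var α ∧ vdash Δ α

/-- The pure left variable inclusion companion of a consequence relation. -/
def PLVI {L V : Type*} (var : L → Set V) (vdash : Set L → L → Prop)
    (Γ : Set L) (α : L) : Prop :=
  ∃ Δ ⊆ Γ, Δ.Nonempty ∧ varSet var Δ ⊆ var α ∧ vdash Δ α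

section VariableInclusion

variable {L V : Type*} {var : L → Set V} {vdash : Set L → L → Prop} {Γ : Set L} {γ : L}

theorem var_subset_varSet (hγ : γ ∈ Γ) : var γ ⊆ varSet var Γ :=
  Set.subset_biUnion_of_mem (u := var) hγ

theorem finite_varSet (hΓ : Γ.Finite) (hvar : ∀ γ ∈ Γ, (var γ).Finite) :
    (varSet var Γ).Finite :=
  hΓ.biUnion hvar

theorem PLVI.exists_var_eq_empty_of_disjoint (h : PLVI var vdash Γ γ)
    (hdisj : Disjoint (varSet var Γ) (var γ)) : ∃ δ ∈ Γ, var δ = ∅ := by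
  obtain ⟨Δ, hΔΓ, ⟨δ, hδ⟩, hΔγ, -⟩ := h
  have hδΓ : var δ ⊆ varSet var Γ := var_subset_varSet (hΔΓ hδ)
  have hδγ : var δ ⊆ var γ := (var_subset_varSet hδ).trans hΔγ
  exact ⟨δ, hΔΓ hδ, Set.subset_empty_iff.1 (hdisj hδΓ hδγ)⟩

theorem LVI.plvi_of_not_vdash_empty (h : LVI var vdash Γ γ) (hγ : ¬ vdash ∅ γ) :
    PLVI var vdash Γ γ := by
  obtain ⟨Δ, hΔΓ, hΔγ, hΔ⟩ := h
  have hΔne : Δ.Nonempty := Set.nonempty_iff_ne_empty.2 fun hempty => hγ (hempty ▸ hΔ)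
  exact ⟨Δ, hΔΓ, hΔne, hΔγ, hΔ⟩

end VariableInclusion

theorem plvi_trivial_pair_constant_general {L V : Type*} {var : L → Set V}
    {ι : V → L} (hιvar : ∀ q : V, var (ι q) = {q}) (vdash : Set L → L → Prop)
    {Γ : Set L} (hfresh : ∃ q, q ∉ varSet var Γ) :
    ((∀ γ : L, PLVI var vdash Γ γ) → ∃ δ ∈ Γ, var δ = ∅) ∧
    ((∀ q : V, ¬ vdash ∅ (ι q)) →
      (∀ γ : L, LVI var vdash Γ γ) → ∃ δ ∈ Γ, var δ = ∅) := by
  obtain ⟨q, hq⟩ := hfresh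
  have hdisj : Disjoint (varSet var Γ) (var (ι q)) := by
    rwa [hιvar, Set.disjoint_singleton_right]
  exact ⟨fun h => (h (ι q)).exists_var_eq_empty_of_disjoint hdisj,
    fun hthm h => ((h (ι q)).plvi_of_not_vdash_empty (hthm q)).exists_var_eq_empty_of_disjoint
      hdisj⟩

/-- If a pair `{α, β}` trivializes the pure left variable inclusion companion, then
`α` or `β` is a constant; the same holds for the left variable inclusion companion
provided no variable is a theorem of `⊢`. -/
theorem plvi_trivial_pair_constant {L V : Type*} [Infinite V]
    (var : L → Set V) (hfin : ∀ α : L, (var α).Finite)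
    (ι : V → L) (hι : Function.Injective ι) (hιvar : ∀ q : V, var (ι q) = {q})
    (vdash : Set L → L → Prop) (α β : L) :
    ((∀ γ : L, PLVI var vdash {α, β} γ) → var α = ∅ ∨ var β = ∅) ∧
    ((∀ q : V, ¬ vdash ∅ (ι q)) →
      (∀ γ : L, LVI var vdash {α, β} γ) → var α = ∅ ∨ var β = ∅) := by
  simpa only [Set.exists_mem_insert, Set.mem_singleton_iff, exists_eq_left] using
    plvi_trivial_pair_constant_general hιvar vdash
      (finite_varSet (Set.toFinite {α, β}) fun γ _ => hfin γ).exists_notMem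
end

section
/- Let L be a type of formulas with a variable function var : L → Set V (each var(α) finite) where V is infinite, with variables embedded via an injection ι : V → L satisfying var(ι q) = {q}, and let ⊢ be a consequence relation on L. If var(φ) ≠ ∅ for every φ ∈ L, then the pure left variable inclusion companion ⊢ᵖˡ is NF-paraconsistent: there exists α ∈ L such that for every β ∈ L there is some γ ∈ L with {α, β} ⊬ᵖˡ γ. Moreover, if additionally ∅ ⊬ ι q for every q ∈ V, then the left variable inclusion companion ⊢ˡ is also NF-paraconsistent. -/
/-!
A witness `Δ` for `Γ ⊢ᵖˡ γ` contains a formula of `Γ` all of whose variables occur in `γ`. Since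
that formula has some variable, `γ` shares a variable with `Γ`; so a finite `Γ` cannot derive a
fresh variable. The companion `⊢ˡ` adds to `⊢ᵖˡ` only the theorems of `⊢`.
-/

section Companions

variable {L V : Type*} {var : L → Set V} {vdash : Set L → L → Prop} {Γ : Set L} {γ : L}

theorem lvi_iff_empty_or_plvi : LVI var vdash Γ γ ↔ vdash ∅ γ ∨ PLVI var vdash Γ γ := by
  constructor
  · rintro ⟨Δ, hΔΓ, hvarΔ, hΔγ⟩
    obtain rfl | hne := Δ.eq_empty_or_nonempty
    · exact Or.inl hΔγ
    · exact Or.inr ⟨Δ, hΔΓ, hne, hvarΔ, hΔγ⟩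
  · rintro (hγ | ⟨Δ, hΔΓ, -, hvarΔ, hΔγ⟩)
    · exact ⟨∅, Γ.empty_subset, by simp [varSet], hγ⟩
    · exact ⟨Δ, hΔΓ, hvarΔ, hΔγ⟩

theorem not_plvi_of_disjoint (hvar : ∀ φ ∈ Γ, (var φ).Nonempty)
    (hdisj : Disjoint (varSet var Γ) (var γ)) : ¬ PLVI var vdash Γ γ := by
  rintro ⟨Δ, hΔΓ, ⟨φ, hφΔ⟩, hvarΔ, -⟩
  obtain ⟨p, hp⟩ := hvar φ (hΔΓ hφΔ)
  have hpΓ : p ∈ varSet var Γ := Set.mem_biUnion (hΔΓ hφΔ) hp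
  have hpγ : p ∈ var γ := hvarΔ (Set.mem_biUnion hφΔ hp)
  exact hdisj.notMem_of_mem_left hpΓ hpγ

theorem exists_variable_not_plvi [Infinite V] {ι : V → L} (hιvar : ∀ q, var (ι q) = {q})
    (hΓ : Γ.Finite) (hfin : ∀ φ ∈ Γ, (var φ).Finite) (hvar : ∀ φ ∈ Γ, (var φ).Nonempty) :
    ∃ q, ¬ PLVI var vdash Γ (ι q) := by
  have hvarΓ : (varSet var Γ).Finite := hΓ.biUnion hfin
  obtain ⟨q, hq⟩ := hvarΓ.exists_notMem
  refine ⟨q, not_plvi_of_disjoint hvar ?_⟩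
  rwa [hιvar, Set.disjoint_singleton_right]

end Companions

/-- If no formula is a constant, then the pure left variable inclusion companion is
NF-paraconsistent; if moreover no variable is a theorem of `⊢`, then the left variable
inclusion companion is NF-paraconsistent as well. -/
theorem plvi_nf_paraconsistent_of_no_constants {L V : Type*} [Infinite V]
    (var : L → Set V) (hfin : ∀ α : L, (var α).Finite)
    (ι : V → L) (hι : Function.Injective ι) (hιvar : ∀ q : V, var (ι q) = {q})
    (vdash : Set L → L → Prop)
    (hvar : ∀ φ : L, var φ ≠ ∅) :
    (∃ α : L, ∀ β : L, ∃ γ : L, ¬ PLVI var vdash {α, β} γ) ∧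
    ((∀ q : V, ¬ vdash ∅ (ι q)) →
      ∃ α : L, ∀ β : L, ∃ γ : L, ¬ LVI var vdash {α, β} γ) := by
  have fresh (α β : L) : ∃ q, ¬ PLVI var vdash {α, β} (ι q) :=
    exists_variable_not_plvi hιvar (Set.toFinite _) (fun φ _ => hfin φ)
      (fun φ _ => Set.nonempty_iff_ne_empty.mpr (hvar φ))
  obtain ⟨p⟩ : Nonempty V := inferInstance
  refine ⟨⟨ι p, fun β => ?_⟩, fun hthm => ⟨ι p, fun β => ?_⟩⟩
  · obtain ⟨q, hq⟩ := fresh (ι p) β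
    exact ⟨ι q, hq⟩
  · obtain ⟨q, hq⟩ := fresh (ι p) β
    exact ⟨ι q, fun h => (lvi_iff_empty_or_plvi.mp h).elim (hthm q) hq⟩
end

section
/- Let L be a type of formulas with a variable function var : L → Set V (each var(α) finite) where V is infinite, with variables embedded via an injection ι : V → L satisfying var(ι q) = {q}, and let ⊢ be a transitive consequence relation on L (if every element of Σ is derivable from Γ and Σ ⊢ α, then Γ ⊢ α). If there is no falsity constant for ⊢, i.e. no β ∈ L with var(β) = ∅ such that {β} ⊢ γ for all γ ∈ L, then the pure left variable inclusion companion ⊢ᵖˡ is NF-paraconsistent: there exists α ∈ L such that for every β ∈ L there is some γ ∈ L with {α, β} ⊬ᵖˡ γ. -/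
/-!
Suppose every formula `α` has a partner `β` such that `{α, β}` entails everything in `⊢ᵖˡ`. A
conclusion `γ` with `var α ⊈ var γ` cannot use the premise `α`, so `var β ⊆ var γ` and `{β} ⊢ γ`.
Two such conclusions with disjoint variables force `var β = ∅`. If `δ` is a second formula, with
`var δ ⊈ var α` and a partner `ε` without variables, then `{β} ⊢ ε` and `{ε} ⊢ α`. Hence `{β}`
derives both `α` and `β`, and therefore everything, making `β` a falsity constant.
-/

/-- Transitivity of a consequence relation: whatever follows from consequences of `Γ` follows from
`Γ`. -/
def IsTransitiveConsequence {L : Type*} (vdash : Set L → L → Prop) : Prop :=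
  ∀ (Γ Δ : Set L) (α : L), (∀ σ ∈ Δ, vdash Γ σ) → vdash Δ α → vdash Γ α

/-- `β` is a falsity constant for `⊢`: it has no variables and derives every formula. -/
def IsFalsityConstant {L V : Type*} (var : L → Set V) (vdash : Set L → L → Prop) (β : L) : Prop :=
  var β = ∅ ∧ ∀ γ, vdash {β} γ

/-- The premises `α` and `β` jointly explode: together they derive every formula. -/
def Explodes {L : Type*} (vdash : Set L → L → Prop) (α β : L) : Prop :=
  ∀ γ, vdash {α, β} γ

/-- NF-paraconsistency: some formula explodes with no formula. -/
def IsNFParaconsistent {L : Type*} (vdash : Set L → L → Prop) : Prop :=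
  ∃ α, ∀ β, ∃ γ, ¬ vdash {α, β} γ

theorem not_isNFParaconsistent_iff {L : Type*} {vdash : Set L → L → Prop} :
    ¬ IsNFParaconsistent vdash ↔ ∀ α, ∃ β, Explodes vdash α β := by
  simp only [IsNFParaconsistent, Explodes, not_exists, not_forall, not_not]

section PureCompanion

variable {L V : Type*} {var : L → Set V} {vdash : Set L → L → Prop} {Γ Δ : Set L} {α β γ δ ε : L}

theorem PLVI.right_of_not_var_subset (h : PLVI var vdash {α, β} γ) (hαγ : ¬ var α ⊆ var γ) :
    var β ⊆ var γ ∧ vdash {β} γ := by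
  obtain ⟨Δ, hΔ, hne, hvar, hd⟩ := h
  have hsub : ∀ σ ∈ Δ, var σ ⊆ var γ := Set.iUnion₂_subset_iff.mp hvar
  have hΔβ : Δ = {β} := hne.subset_singleton_iff.mp fun σ hσ =>
    (hΔ hσ).resolve_left fun hσα => hαγ (hσα ▸ hsub σ hσ)
  subst hΔβ
  exact ⟨hsub β rfl, hd⟩

theorem PLVI.cut (h : PLVI var vdash Δ γ) (htrans : IsTransitiveConsequence vdash)
    (hΓ : ∀ σ ∈ Δ, vdash Γ σ) : vdash Γ γ := by
  obtain ⟨Δ', hΔ', -, -, hd⟩ := h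
  exact htrans Γ Δ' γ (fun σ hσ => hΓ σ (hΔ' hσ)) hd

theorem Explodes.var_eq_empty (h : Explodes (PLVI var vdash) α β)
    (hαγ : ¬ var α ⊆ var γ) (hαδ : ¬ var α ⊆ var δ) (hγδ : Disjoint (var γ) (var δ)) :
    var β = ∅ :=
  Set.subset_eq_empty
    (Set.subset_inter ((h γ).right_of_not_var_subset hαγ).1 ((h δ).right_of_not_var_subset hαδ).1)
    hγδ.inter_eq

theorem Explodes.isFalsityConstant (hαβ : Explodes (PLVI var vdash) α β)
    (htrans : IsTransitiveConsequence vdash) (hδε : Explodes (PLVI var vdash) δ ε)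
    (hα : (var α).Nonempty) (hδα : ¬ var δ ⊆ var α) (hβ : var β = ∅) (hε : var ε = ∅) :
    IsFalsityConstant var vdash β := by
  have derives_of_var_eq_empty {γ : L} (hγ : var γ = ∅) : vdash {β} γ :=
    ((hαβ γ).right_of_not_var_subset (by simpa [hγ] using hα.ne_empty)).2
  have hεα : vdash {ε} α := ((hδε α).right_of_not_var_subset hδα).2
  have hβα : vdash {β} α :=
    htrans {β} {ε} α (by rintro σ rfl; exact derives_of_var_eq_empty hε) hεα
  have hβ_premises : ∀ σ ∈ ({α, β} : Set L), vdash {β} σ := by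
    rintro σ (rfl | rfl)
    exacts [hβα, derives_of_var_eq_empty hβ]
  exact ⟨hβ, fun γ => (hαβ γ).cut htrans hβ_premises⟩

theorem plvi_nf_paraconsistent_of_transitive_general
    (htrans : IsTransitiveConsequence vdash)
    (hnofalsity : ¬ ∃ β, IsFalsityConstant var vdash β)
    (hαβ : ¬ var α ⊆ var β) (hβα : ¬ var β ⊆ var α)
    (hαγ : Disjoint (var α) (var γ)) (hβγ : Disjoint (var β) (var γ)) :
    IsNFParaconsistent (PLVI var vdash) := by
  by_contra hnpara
  obtain ⟨α', hα'⟩ := not_isNFParaconsistent_iff.mp hnpara α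
  obtain ⟨β', hβ'⟩ := not_isNFParaconsistent_iff.mp hnpara β
  have hα : (var α).Nonempty := (Set.nonempty_of_not_subset hαβ).mono Set.sdiff_subset
  have hβ : (var β).Nonempty := (Set.nonempty_of_not_subset hβα).mono Set.sdiff_subset
  have hα'_var : var α' = ∅ := hα'.var_eq_empty hαβ (mt hαγ.eq_bot_of_le hα.ne_empty) hβγ
  have hβ'_var : var β' = ∅ := hβ'.var_eq_empty hβα (mt hβγ.eq_bot_of_le hβ.ne_empty) hαγ
  exact hnofalsity ⟨α', hα'.isFalsityConstant htrans hβ' hα hβα hα'_var hβ'_var⟩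

end PureCompanion

/-- If `⊢` is transitive and has no falsity constant, then its pure left variable
inclusion companion is NF-paraconsistent. -/
theorem plvi_nf_paraconsistent_of_transitive {L V : Type*} [Infinite V]
    (var : L → Set V) (hfin : ∀ α : L, (var α).Finite)
    (ι : V → L) (hι : Function.Injective ι) (hιvar : ∀ q : V, var (ι q) = {q})
    (vdash : Set L → L → Prop)
    (htrans : ∀ (Γ Δ : Set L) (α : L), (∀ σ ∈ Δ, vdash Γ σ) → vdash Δ α → vdash Γ α)
    (hnofalsity : ¬ ∃ β : L, var β = ∅ ∧ ∀ γ : L, vdash {β} γ) :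
    ∃ α : L, ∀ β : L, ∃ γ : L, ¬ PLVI var vdash {α, β} γ := by
  let q := Infinite.natEmbedding V
  exact plvi_nf_paraconsistent_of_transitive_general (α := ι (q 0)) (β := ι (q 1)) (γ := ι (q 2))
    htrans hnofalsity (by simp [hιvar]) (by simp [hιvar]) (by simp [hιvar]) (by simp [hιvar])
end

section
/- Let L be a type of formulas with a variable function var : L → Set V (each var(α) finite) where V is infinite, with variables embedded via an injection ι : V → L satisfying var(ι q) = {q}. Let ⊢ be a monotonic and transitive consequence relation on L such that ∅ ⊬ ι q for every q ∈ V. If there is no falsity constant for ⊢ (no β ∈ L with var(β) = ∅ such that {β} ⊢ γ for all γ ∈ L), then the left variable inclusion companion ⊢ˡ is NF-paraconsistent: there exists α ∈ L such that for every β ∈ L there is some γ ∈ L with {α, β} ⊬ˡ γ. -/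
namespace LVI

variable {L V : Type*} {var : L → Set V} {vdash : Set L → L → Prop}

theorem of_insert_of_not_var_subset {Γ : Set L} {α γ : L} (h : LVI var vdash (insert α Γ) γ)
    (hα : ¬ var α ⊆ var γ) : LVI var vdash Γ γ := by
  obtain ⟨Δ, hΔ, hvar, hd⟩ := h
  have hαΔ : α ∉ Δ := fun hmem => hα ((Set.subset_biUnion_of_mem hmem).trans hvar)
  exact ⟨Δ, (Set.subset_insert_iff_of_notMem hαΔ).mp hΔ, hvar, hd⟩

theorem singleton_iff {β γ : L} :
    LVI var vdash {β} γ ↔ vdash ∅ γ ∨ var β ⊆ var γ ∧ vdash {β} γ := by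
  simp only [LVI, varSet, Set.subset_singleton_iff_eq, or_and_right, exists_or, exists_eq_left,
    Set.biUnion_empty, Set.empty_subset, true_and, Set.biUnion_singleton]

theorem vdash_of_forall_vdash
    (htrans : ∀ (Γ Δ : Set L) (α : L), (∀ σ ∈ Δ, vdash Γ σ) → vdash Δ α → vdash Γ α)
    {Γ Δ : Set L} {γ : L} (h : LVI var vdash Δ γ) (hΓ : ∀ σ ∈ Δ, vdash Γ σ) : vdash Γ γ := by
  obtain ⟨Θ, hΘ, -, hd⟩ := h
  exact htrans Γ Θ γ (fun σ hσ => hΓ σ (hΘ hσ)) hd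

theorem vdash_singleton
    (htrans : ∀ (Γ Δ : Set L) (α : L), (∀ σ ∈ Δ, vdash Γ σ) → vdash Δ α → vdash Γ α)
    {β γ : L} (h : LVI var vdash {β} γ) : vdash {β} γ := by
  rcases singleton_iff.mp h with hthm | ⟨-, hβ⟩
  · exact htrans {β} ∅ γ (fun _ hσ => hσ.elim) hthm
  · exact hβ

theorem var_subset_of_singleton {β γ : L} (h : LVI var vdash {β} γ) (hγ : ¬ vdash ∅ γ) :
    var β ⊆ var γ :=
  ((singleton_iff.mp h).resolve_left hγ).1

theorem var_eq_empty_of_disjoint {β γ δ : L} (hβγ : LVI var vdash {β} γ)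
    (hβδ : LVI var vdash {β} δ) (hγ : ¬ vdash ∅ γ) (hδ : ¬ vdash ∅ δ)
    (hdisj : Disjoint (var γ) (var δ)) : var β = ∅ :=
  Set.subset_eq_empty
    (Set.subset_inter (hβγ.var_subset_of_singleton hγ) (hβδ.var_subset_of_singleton hδ))
    hdisj.inter_eq

/-- The detour through `δ` is there because explosion alone does not give `{β} ⊢ α`: a derivation
of `α` from `{α, β}` may use `α` itself. -/
theorem vdash_singleton_of_forall_pair
    (htrans : ∀ (Γ Δ : Set L) (α : L), (∀ σ ∈ Δ, vdash Γ σ) → vdash Δ α → vdash Γ α)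
    {α β δ : L} (hexp : ∀ γ, LVI var vdash {α, β} γ) (hα : (var α).Nonempty)
    (hβ : var β = ∅) (hδ : var δ = ∅) (hδα : LVI var vdash {δ} α) (γ : L) : vdash {β} γ := by
  have vdash_varFree : ∀ σ, var σ = ∅ → vdash {β} σ := fun σ hσ =>
    ((hexp σ).of_insert_of_not_var_subset
      fun hsub => hα.ne_empty (Set.subset_eq_empty hsub hσ)).vdash_singleton htrans
  have hβα : vdash {β} α :=
    hδα.vdash_of_forall_vdash htrans fun σ hσ => hσ ▸ vdash_varFree δ hδ
  refine (hexp γ).vdash_of_forall_vdash htrans ?_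
  rintro σ (rfl | rfl)
  · exact hβα
  · exact vdash_varFree σ hβ

end LVI

theorem lvi_nf_paraconsistent_of_mono_transitive_general {L V I : Type*}
    {var : L → Set V} {vdash : Set L → L → Prop}
    (htrans : ∀ (Γ Δ : Set L) (α : L), (∀ σ ∈ Δ, vdash Γ σ) → vdash Δ α → vdash Γ α)
    (hI : 3 ≤ ENat.card I) {φ : I → L} (hne : ∀ i, (var (φ i)).Nonempty)
    (hdisj : Pairwise fun i j => Disjoint (var (φ i)) (var (φ j)))
    (hthm : ∀ i, ¬ vdash ∅ (φ i))
    (hnofalsity : ¬ ∃ β : L, var β = ∅ ∧ ∀ γ : L, vdash {β} γ) :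
    ∃ α : L, ∀ β : L, ∃ γ : L, ¬ LVI var vdash {α, β} γ := by
  by_contra! hexp
  choose β hβ using fun i => hexp (φ i)
  have lvi_of_ne : ∀ i j, i ≠ j → LVI var vdash {β i} (φ j) := fun i j hij =>
    (hβ i (φ j)).of_insert_of_not_var_subset
      fun hsub => (hne i).ne_empty ((hdisj hij).eq_bot_of_le hsub)
  have : Nontrivial I := (ENat.one_lt_card_iff_nontrivial I).mp (lt_of_lt_of_le (by norm_num) hI)
  have var_β : ∀ i, var (β i) = ∅ := fun i => by
    obtain ⟨j, hji⟩ := exists_ne i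
    obtain ⟨k, hki, hkj⟩ := ENat.exists_ne_ne_of_three_le hI i j
    exact (lvi_of_ne i j hji.symm).var_eq_empty_of_disjoint (lvi_of_ne i k hki.symm)
      (hthm j) (hthm k) (hdisj hkj.symm)
  obtain ⟨i, j, hij⟩ := exists_pair_ne I
  exact hnofalsity ⟨β i, var_β i, LVI.vdash_singleton_of_forall_pair htrans (hβ i) (hne i)
    (var_β i) (var_β j) (lvi_of_ne j i hij.symm)⟩

/-- If `⊢` is monotonic and transitive, no variable is a theorem, and there is no
falsity constant, then the left variable inclusion companion is NF-paraconsistent. -/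
theorem lvi_nf_paraconsistent_of_mono_transitive {L V : Type*} [Infinite V]
    (var : L → Set V) (hfin : ∀ α : L, (var α).Finite)
    (ι : V → L) (hι : Function.Injective ι) (hιvar : ∀ q : V, var (ι q) = {q})
    (vdash : Set L → L → Prop)
    (hmono : ∀ (Γ Δ : Set L) (α : L), vdash Γ α → Γ ⊆ Δ → vdash Δ α)
    (htrans : ∀ (Γ Δ : Set L) (α : L), (∀ σ ∈ Δ, vdash Γ σ) → vdash Δ α → vdash Γ α)
    (hvarthm : ∀ q : V, ¬ vdash ∅ (ι q))
    (hnofalsity : ¬ ∃ β : L, var β = ∅ ∧ ∀ γ : L, vdash {β} γ) :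
    ∃ α : L, ∀ β : L, ∃ γ : L, ¬ LVI var vdash {α, β} γ :=
  lvi_nf_paraconsistent_of_mono_transitive_general htrans (by simp) (φ := ι)
    (by simp [hιvar]) (fun p q hpq => by simpa [hιvar] using hpq) hvarthm hnofalsity
end

section
/- Let L be a nonempty type, C : Set L → Set L a monotonic and transitive consequence operator, and conj : L → L → L a binary operation satisfying the elimination rule (∧E): α ∈ C({conj α β}) and β ∈ C({conj α β}) for all α, β, and such that conj φ φ ≠ φ for every φ ∈ L. If C is finitely trivializable (there exists a finite Γ with C(Γ) = Set.univ), then spECQ holds in C (for every Γ ⊊ Set.univ there exists α with Γ ∪ {α} ⊊ Set.univ and C(Γ ∪ {α}) = Set.univ), pfECQ1 holds in C (for every Γ ⊊ Set.univ there exists Δ ⊊ Set.univ with Γ ⊆ Δ and C(Δ) = Set.univ), and gECQ holds in C (for every α there exists β with C({α, β}) = Set.univ). -/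
/-!
Under (∧E), any two formulas follow from a single one, so transitivity collapses an exploding finite
set to one exploding formula `σ`. Then `conj σ σ` explodes as well, and it differs from `σ`; hence
for any formula missing from a set `Γ` there is an exploding formula other than it, whose addition
to `Γ` trivializes `Γ` while keeping it proper.
-/

namespace ConsequenceOperator

variable {L : Type*} {C : Set L → Set L} {Γ Δ : Set L}

/-- Transitivity of a consequence operator: what follows from consequences of `Γ` follows from
`Γ`. -/
def IsTransitive (C : Set L → Set L) : Prop :=
  ∀ Γ Δ : Set L, Δ ⊆ C Γ → C Δ ⊆ C Γ

/-- `Γ` explodes (is `C`-trivial): every formula is a consequence of it. -/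
def Explodes (C : Set L → Set L) (Γ : Set L) : Prop :=
  C Γ = Set.univ

/-- The explosion principle spECQ: every proper set of formulas explodes after adding a single
formula that keeps it proper. -/
def SpECQ (C : Set L → Set L) : Prop :=
  ∀ Γ : Set L, Γ ⊂ Set.univ → ∃ α : L, Γ ∪ {α} ⊂ Set.univ ∧ Explodes C (Γ ∪ {α})

/-- The explosion principle pfECQ1: every proper set of formulas extends to a proper exploding
set. -/
def PfECQ1 (C : Set L → Set L) : Prop :=
  ∀ Γ : Set L, Γ ⊂ Set.univ → ∃ Δ : Set L, Δ ⊂ Set.univ ∧ Γ ⊆ Δ ∧ Explodes C Δ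

/-- The explosion principle gECQ: every formula explodes together with some formula. -/
def GECQ (C : Set L → Set L) : Prop :=
  ∀ α : L, ∃ β : L, Explodes C {α, β}

theorem Explodes.mono (hΓ : Explodes C Γ) (hC : Monotone C) (h : Γ ⊆ Δ) : Explodes C Δ :=
  Set.eq_univ_of_subset (hC h) hΓ

theorem Explodes.of_subset_consequences (hΓ : Explodes C Γ) (hC : IsTransitive C)
    (h : Γ ⊆ C Δ) : Explodes C Δ :=
  Set.eq_univ_of_subset (hC Δ Γ h) hΓ

theorem IsTransitive.isTrans_mem_singleton (hC : IsTransitive C) :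
    IsTrans L fun α β => α ∈ C {β} where
  trans _ _ _ hαβ hβγ := hC _ _ (Set.singleton_subset_iff.2 hβγ) hαβ

theorem exists_subset_consequences_singleton [Nonempty L] (hC : IsTransitive C)
    (hdir : Directed (fun α β => α ∈ C {β}) id) (hΓ : Γ.Finite) : ∃ σ : L, Γ ⊆ C {σ} :=
  have := hC.isTrans_mem_singleton
  hdir.finite_set_le hΓ

theorem spECQ_of_nontrivial_explodes_singleton (hC : Monotone C)
    (h : {α | Explodes C {α}}.Nontrivial) : SpECQ C := by
  intro Γ hΓ
  obtain ⟨x, hxΓ⟩ := Set.ssubset_univ_iff_nonempty_compl.1 hΓ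
  obtain ⟨α, hα, hαx⟩ := h.exists_ne x
  have hx : x ∉ Γ ∪ {α} := not_or.2 ⟨hxΓ, hαx.symm⟩
  exact ⟨α, Set.ssubset_univ_iff_nonempty_compl.2 ⟨x, hx⟩,
    hα.mono hC Set.subset_union_right⟩

theorem SpECQ.pfECQ1 (h : SpECQ C) : PfECQ1 C := by
  intro Γ hΓ
  obtain ⟨α, hproper, hα⟩ := h Γ hΓ
  exact ⟨Γ ∪ {α}, hproper, Set.subset_union_left, hα⟩

theorem Explodes.gECQ {σ : L} (hσ : Explodes C {σ}) (hC : Monotone C) : GECQ C :=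
  fun α => ⟨σ, hσ.mono hC (Set.subset_insert α {σ})⟩

end ConsequenceOperator

open ConsequenceOperator

/-- For a monotonic and transitive consequence operator with a conjunction satisfying
(∧E) and `conj φ φ ≠ φ`, finite trivializability implies spECQ, pfECQ1, and gECQ. -/
theorem finitely_trivializable_implies_specq_pfecq_gecq {L : Type*} [Nonempty L]
    (C : Set L → Set L)
    (hmono : ∀ ⦃Γ Δ : Set L⦄, Γ ⊆ Δ → C Γ ⊆ C Δ)
    (htrans : ∀ Γ Δ : Set L, Δ ⊆ C Γ → C Δ ⊆ C Γ)
    (conj : L → L → L)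
    (hconj : ∀ α β : L, α ∈ C {conj α β} ∧ β ∈ C {conj α β})
    (hne : ∀ φ : L, conj φ φ ≠ φ)
    (hfin : ∃ Γ : Set L, Γ.Finite ∧ C Γ = Set.univ) :
    (∀ Γ : Set L, Γ ⊂ Set.univ →
      ∃ α : L, Γ ∪ {α} ⊂ Set.univ ∧ C (Γ ∪ {α}) = Set.univ) ∧
    (∀ Γ : Set L, Γ ⊂ Set.univ →
      ∃ Δ : Set L, Δ ⊂ Set.univ ∧ Γ ⊆ Δ ∧ C Δ = Set.univ) ∧
    (∀ α : L, ∃ β : L, C {α, β} = Set.univ) := by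
  obtain ⟨Γ, hΓ, hΓC⟩ := hfin
  have hdir : Directed (fun α β => α ∈ C {β}) id := fun α β => ⟨conj α β, hconj α β⟩
  obtain ⟨σ, hΓσ⟩ := exists_subset_consequences_singleton htrans hdir hΓ
  have hσ : Explodes C {σ} := Explodes.of_subset_consequences hΓC htrans hΓσ
  have hσσ : Explodes C {conj σ σ} :=
    hσ.of_subset_consequences htrans (Set.singleton_subset_iff.2 (hconj σ σ).1)
  have hsp : SpECQ C :=
    spECQ_of_nontrivial_explodes_singleton hmono ⟨conj σ σ, hσσ, σ, hσ, hne σ⟩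
  exact ⟨hsp, hsp.pfECQ1, hσ.gECQ hmono⟩
end
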